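/- Let d ≥ 2 be an integer and d* a positive integer with 2d* > d. Then there exists a constant C > 0 (depending only on d and d*) such that for every s ∈ [0,1] and all measurable F, G : ℝ^{d−1} × ℤ → ℂ with ‖F‖_s < ∞ and ‖G‖_s < ∞, the convolution (F ⋆ G)(ξ,λ) := ∫_{ℝ^{d−1}} Σ_{μ∈ℤ} F(η,μ) G(ξ−η, λ−μ) dη satisfies ‖F ⋆ G‖_s ≤ C ‖F‖_s ‖G‖_s. -/

import Mathlib

open MeasureTheory
open scoped ENNReal

noncomputable section

/-- Squared norm of the analytic space `Y_s`, on the Fourier side: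
`‖F‖_s² = ∫_{ℝ^{d−1}} Σ_{λ∈ℤ} e^{2s|(ξ,λ)|} ⟨(ξ,λ)⟩^{2d*} |F(ξ,λ)|² dξ`. -/
def YNormSq (d dstar : ℕ) (s : ℝ) (F : EuclideanSpace ℝ (Fin (d - 1)) × ℤ → ℂ) : ℝ≥0∞ :=
  ∫⁻ ξ : EuclideanSpace ℝ (Fin (d - 1)), ∑' l : ℤ,
    ENNReal.ofReal (Real.exp (2 * s * Real.sqrt (‖ξ‖ ^ 2 + (l : ℝ) ^ 2)) *
      (1 + ‖ξ‖ ^ 2 + (l : ℝ) ^ 2) ^ dstar * ‖F (ξ, l)‖ ^ 2)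

/-!
Let `v` be a weight on a group. Writing `f(y) g(x - y)` as the product of
`(v(y) v(x - y)) ^ (-1/2)` and `(v(y) v(x - y)) ^ (1/2) f(y) g(x - y)`, Cauchy–Schwarz gives the
pointwise bound `(f ⋆ g)² ≤ (v⁻¹ ⋆ v⁻¹) · (v f² ⋆ v g²)`. Since the integral of a convolution is
the product of the integrals, convolution is bounded on `L²(v)` as soon as `v · (v⁻¹ ⋆ v⁻¹)` is
bounded. For `v = e p` with `e` submultiplicative and `p(x + y) ≤ c (p(x) + p(y))`, the quotient
`v(x) / (v(y) v(x - y))` is at most `c (1 / p(y) + 1 / p(x - y))`, so that `2 c ∫ 1 / p` is such a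
bound. The triangle inequality provides both properties for `e = exp (2 s |x|)` and
`p = (1 + |x|²) ^ r`, and `1 / p` is integrable on `E × ℤ` when `2 r > dim E + 1`.
-/

section LConvolution

theorem sq_lintegral_le_lintegral_inv_mul_lintegral_mul_sq {α : Type*} [MeasurableSpace α]
    {μ : Measure α} {u h : α → ℝ≥0∞} (hu : AEMeasurable u μ) (hh : AEMeasurable h μ)
    (hu₀ : ∀ x, u x ≠ 0) (hu_top : ∀ x, u x ≠ ⊤) :
    (∫⁻ x, h x ∂μ) ^ 2 ≤ (∫⁻ x, (u x)⁻¹ ∂μ) * ∫⁻ x, u x * h x ^ 2 ∂μ := by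
  have h_split (x : α) : (u x)⁻¹ ^ (1 / 2 : ℝ) * (u x * h x ^ 2) ^ (1 / 2 : ℝ) = h x := by
    rw [← ENNReal.mul_rpow_of_nonneg _ _ (by norm_num), ← mul_assoc,
      ENNReal.inv_mul_cancel (hu₀ x) (hu_top x), one_mul, ← ENNReal.rpow_natCast,
      ← ENNReal.rpow_mul]
    norm_num
  have h_holder := ENNReal.lintegral_mul_norm_pow_le hu.inv (hu.mul (hh.pow_const 2))
    (p := 1 / 2) (q := 1 / 2) (by norm_num) (by norm_num) (by norm_num)
  simp only [Pi.inv_apply, Pi.mul_apply, h_split] at h_holder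
  rw [← ENNReal.mul_rpow_of_nonneg _ _ (by norm_num)] at h_holder
  calc (∫⁻ x, h x ∂μ) ^ 2
      ≤ (((∫⁻ x, (u x)⁻¹ ∂μ) * ∫⁻ x, u x * h x ^ 2 ∂μ) ^ (1 / 2 : ℝ)) ^ 2 := by gcongr
    _ = (∫⁻ x, (u x)⁻¹ ∂μ) * ∫⁻ x, u x * h x ^ 2 ∂μ := by
      rw [← ENNReal.rpow_natCast, ← ENNReal.rpow_mul]
      norm_num

variable {G : Type*} [AddGroup G] [MeasurableSpace G] [MeasurableAdd₂ G] [MeasurableNeg G]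
  {μ : Measure G}

theorem lintegral_lconvolution [SFinite μ] [μ.IsAddLeftInvariant] {f g : G → ℝ≥0∞}
    (hf : Measurable f) (hg : Measurable g) :
    ∫⁻ x, (f ⋆ₗ[μ] g) x ∂μ = (∫⁻ x, f x ∂μ) * ∫⁻ x, g x ∂μ := by
  simp only [lconvolution_def]
  rw [lintegral_lintegral_swap (by fun_prop)]
  calc ∫⁻ y, ∫⁻ x, f y * g (-y + x) ∂μ ∂μ
      = ∫⁻ y, f y * ∫⁻ x, g x ∂μ ∂μ := by
        refine lintegral_congr fun y => ?_
        rw [lintegral_const_mul _ (by fun_prop), lintegral_add_left_eq_self]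
    _ = (∫⁻ x, f x ∂μ) * ∫⁻ x, g x ∂μ := lintegral_mul_const _ hf

theorem sq_lconvolution_le {v f g : G → ℝ≥0∞} (hv : Measurable v) (hf : Measurable f)
    (hg : Measurable g) (hv₀ : ∀ x, v x ≠ 0) (hv_top : ∀ x, v x ≠ ⊤) (x : G) :
    (f ⋆ₗ[μ] g) x ^ 2 ≤ (v⁻¹ ⋆ₗ[μ] v⁻¹) x * ((v * f ^ 2) ⋆ₗ[μ] (v * g ^ 2)) x := by
  have h := sq_lintegral_le_lintegral_inv_mul_lintegral_mul_sq (μ := μ)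
    (u := fun y => v y * v (-y + x)) (h := fun y => f y * g (-y + x))
    (by fun_prop) (by fun_prop) (fun y => mul_ne_zero (hv₀ _) (hv₀ _))
    (fun y => ENNReal.mul_ne_top (hv_top _) (hv_top _))
  simpa only [lconvolution_def, Pi.inv_apply, Pi.mul_apply, Pi.pow_apply, mul_pow,
    ENNReal.mul_inv (.inl (hv₀ _)) (.inl (hv_top _)), mul_mul_mul_comm] using h

theorem lintegral_mul_sq_lconvolution_le [SFinite μ] [μ.IsAddLeftInvariant]
    {v f g : G → ℝ≥0∞} {K : ℝ≥0∞} (hv : Measurable v) (hf : Measurable f) (hg : Measurable g)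
    (hv₀ : ∀ x, v x ≠ 0) (hv_top : ∀ x, v x ≠ ⊤) (hK : ∀ x, v x * (v⁻¹ ⋆ₗ[μ] v⁻¹) x ≤ K) :
    ∫⁻ x, v x * (f ⋆ₗ[μ] g) x ^ 2 ∂μ ≤
      K * (∫⁻ x, v x * f x ^ 2 ∂μ) * ∫⁻ x, v x * g x ^ 2 ∂μ := by
  have hvf : Measurable (v * f ^ 2) := hv.mul (hf.pow_const 2)
  have hvg : Measurable (v * g ^ 2) := hv.mul (hg.pow_const 2)
  calc ∫⁻ x, v x * (f ⋆ₗ[μ] g) x ^ 2 ∂μ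
      ≤ ∫⁻ x, K * ((v * f ^ 2) ⋆ₗ[μ] (v * g ^ 2)) x ∂μ := by
        refine lintegral_mono fun x => ?_
        calc v x * (f ⋆ₗ[μ] g) x ^ 2
            ≤ v x * ((v⁻¹ ⋆ₗ[μ] v⁻¹) x * ((v * f ^ 2) ⋆ₗ[μ] (v * g ^ 2)) x) := by
              gcongr
              exact sq_lconvolution_le hv hf hg hv₀ hv_top x
          _ ≤ K * ((v * f ^ 2) ⋆ₗ[μ] (v * g ^ 2)) x := by
              rw [← mul_assoc]
              gcongr
              exact hK x
    _ = K * (∫⁻ x, v x * f x ^ 2 ∂μ) * ∫⁻ x, v x * g x ^ 2 ∂μ := by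
        rw [lintegral_const_mul _ (by fun_prop), lintegral_lconvolution hvf hvg, mul_assoc]
        rfl

theorem mul_lconvolution_inv_inv_le [μ.IsAddLeftInvariant] {e p : G → ℝ≥0∞} {c : ℝ≥0∞}
    (hp : Measurable p) (he₀ : ∀ x, e x ≠ 0) (he_top : ∀ x, e x ≠ ⊤)
    (hp₀ : ∀ x, p x ≠ 0) (hp_top : ∀ x, p x ≠ ⊤) (hp_neg : ∀ x, p (-x) = p x)
    (he_add : ∀ x y, e (x + y) ≤ e x * e y) (hp_add : ∀ x y, p (x + y) ≤ c * (p x + p y)) (x : G) :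
    (e * p) x * ((e * p)⁻¹ ⋆ₗ[μ] (e * p)⁻¹) x ≤ 2 * c * ∫⁻ y, (p y)⁻¹ ∂μ := by
  have h_pointwise (y z : G) :
      (e * p) (y + z) * ((e * p)⁻¹ y * (e * p)⁻¹ z) ≤ c * ((p y)⁻¹ + (p z)⁻¹) := by
    simp only [Pi.mul_apply, Pi.inv_apply, ENNReal.mul_inv (.inl (he₀ _)) (.inl (he_top _))]
    calc e (y + z) * p (y + z) * ((e y)⁻¹ * (p y)⁻¹ * ((e z)⁻¹ * (p z)⁻¹))
        ≤ e y * e z * (c * (p y + p z)) * ((e y)⁻¹ * (p y)⁻¹ * ((e z)⁻¹ * (p z)⁻¹)) := by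
          gcongr
          exacts [he_add y z, hp_add y z]
      _ = e y * (e y)⁻¹ * (e z * (e z)⁻¹) *
          (c * (p z * (p z)⁻¹ * (p y)⁻¹ + p y * (p y)⁻¹ * (p z)⁻¹)) := by ring
      _ = c * ((p y)⁻¹ + (p z)⁻¹) := by
          simp only [ENNReal.mul_inv_cancel (he₀ _) (he_top _),
            ENNReal.mul_inv_cancel (hp₀ _) (hp_top _), one_mul]
  have h_reflect : ∫⁻ y, (p (-y + x))⁻¹ ∂μ = ∫⁻ y, (p y)⁻¹ ∂μ := by
    rw [← lintegral_add_left_eq_self (fun y => (p y)⁻¹) (-x)]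
    refine lintegral_congr fun y => ?_
    rw [← hp_neg (-x + y), neg_add_rev, neg_neg]
  have h_ne_top : (e * p) x ≠ ⊤ := ENNReal.mul_ne_top (he_top x) (hp_top x)
  calc (e * p) x * ((e * p)⁻¹ ⋆ₗ[μ] (e * p)⁻¹) x
      = ∫⁻ y, (e * p) (y + (-y + x)) * ((e * p)⁻¹ y * (e * p)⁻¹ (-y + x)) ∂μ := by
        simp only [add_neg_cancel_left]
        rw [lintegral_const_mul' _ _ h_ne_top, lconvolution_def]
    _ ≤ ∫⁻ y, c * ((p y)⁻¹ + (p (-y + x))⁻¹) ∂μ :=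
        lintegral_mono fun y => h_pointwise y (-y + x)
    _ = 2 * c * ∫⁻ y, (p y)⁻¹ ∂μ := by
        rw [lintegral_const_mul _ (by fun_prop), lintegral_add_left (by fun_prop), h_reflect]
        ring

end LConvolution

theorem lintegral_prod_count {α ι : Type*} [MeasurableSpace α] [MeasurableSpace ι] [Countable ι]
    [MeasurableSingletonClass ι] (μ : Measure α) {f : α × ι → ℝ≥0∞} (hf : Measurable f) :
    ∫⁻ p, f p ∂μ.prod .count = ∫⁻ x, ∑' i, f (x, i) ∂μ := by
  simp only [lintegral_prod _ hf.aemeasurable, lintegral_count]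

theorem lconvolution_prod_count {α ι : Type*} [AddCommGroup α] [MeasurableSpace α]
    [AddCommGroup ι] [MeasurableSpace ι] [Countable ι] [MeasurableSingletonClass ι]
    [MeasurableAdd₂ (α × ι)] [MeasurableNeg (α × ι)] (μ : Measure α) {f g : α × ι → ℝ≥0∞}
    (hf : Measurable f) (hg : Measurable g) (x : α) (i : ι) :
    (f ⋆ₗ[μ.prod .count] g) (x, i) = ∫⁻ y, ∑' j, f (y, j) * g (x - y, i - j) ∂μ := by
  rw [lconvolution_def, lintegral_prod_count μ (by fun_prop)]
  simp only [Prod.neg_mk, Prod.mk_add_mk, neg_add_eq_sub]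

theorem exists_pos_le_ofReal_sq {K : ℝ≥0∞} (hK : K ≠ ⊤) :
    ∃ C > 0, K ≤ ENNReal.ofReal (C ^ 2) := by
  refine ⟨√(K.toReal + 1), by positivity, ?_⟩
  rw [Real.sq_sqrt (by positivity), ← ENNReal.ofReal_toReal hK]
  gcongr
  simp

/-- The Sobolev weight `⟨t⟩ ^ (2r) = (1 + t²) ^ r` of order `r`, as a function of the modulus `t`
of the frequency. -/
def sobolevWeight (r t : ℝ) : ℝ≥0∞ :=
  ENNReal.ofReal (1 + t ^ 2) ^ r

/-- The squared weight `e ^ (2st) ⟨t⟩ ^ (2r)` which defines analytic regularity with radius `s` and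
Sobolev order `r`, as a function of the modulus `t` of the frequency. -/
def analyticWeight (s r t : ℝ) : ℝ≥0∞ :=
  ENNReal.ofReal (Real.exp (2 * s * t)) * sobolevWeight r t

theorem sobolevWeight_ne_zero (r t : ℝ) : sobolevWeight r t ≠ 0 :=
  (ENNReal.rpow_pos (ENNReal.ofReal_pos.2 (by positivity)) ENNReal.ofReal_ne_top).ne'

theorem sobolevWeight_ne_top (r t : ℝ) : sobolevWeight r t ≠ ⊤ :=
  ENNReal.rpow_ne_top_of_ne_zero (ENNReal.ofReal_pos.2 (by positivity)).ne' ENNReal.ofReal_ne_top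

@[fun_prop]
theorem measurable_sobolevWeight (r : ℝ) : Measurable (sobolevWeight r) := by
  unfold sobolevWeight
  fun_prop

@[fun_prop]
theorem measurable_analyticWeight (s r : ℝ) : Measurable (analyticWeight s r) := by
  unfold analyticWeight
  fun_prop

theorem inv_sobolevWeight (r t : ℝ) :
    (sobolevWeight r t)⁻¹ = ENNReal.ofReal ((1 + t ^ 2) ^ (-r)) := by
  rw [sobolevWeight, ← ENNReal.rpow_neg, ENNReal.ofReal_rpow_of_pos (by positivity)]

theorem sobolevWeight_le_of_le_add {r t a b : ℝ} (hr : 0 ≤ r) (ht : 0 ≤ t) (h : t ≤ a + b) :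
    sobolevWeight r t ≤ 4 ^ r * (sobolevWeight r a + sobolevWeight r b) := by
  have h_sq : 1 + t ^ 2 ≤ 2 * ((1 + a ^ 2) + (1 + b ^ 2)) := by
    nlinarith [sq_nonneg (a - b)]
  calc sobolevWeight r t
      ≤ (2 * (ENNReal.ofReal (1 + a ^ 2) + ENNReal.ofReal (1 + b ^ 2))) ^ r := by
        rw [← ENNReal.ofReal_add (by positivity) (by positivity), ← ENNReal.ofReal_ofNat 2,
          ← ENNReal.ofReal_mul (by norm_num)]
        unfold sobolevWeight
        gcongr
    _ ≤ 2 ^ r * (2 ^ r * (sobolevWeight r a + sobolevWeight r b)) := by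
        rw [ENNReal.mul_rpow_of_nonneg _ _ hr]
        gcongr
        exact ENNReal.add_rpow_le_two_rpow_mul_rpow_add_rpow _ _ hr
    _ = 4 ^ r * (sobolevWeight r a + sobolevWeight r b) := by
        rw [← mul_assoc, ← ENNReal.mul_rpow_of_nonneg _ _ hr]
        norm_num

theorem ofReal_exp_le_of_le_add {s t a b : ℝ} (hs : 0 ≤ s) (h : t ≤ a + b) :
    ENNReal.ofReal (Real.exp (2 * s * t)) ≤
      ENNReal.ofReal (Real.exp (2 * s * a)) * ENNReal.ofReal (Real.exp (2 * s * b)) := by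
  rw [← ENNReal.ofReal_mul (by positivity), ← Real.exp_add, ← mul_add]
  gcongr

theorem lintegral_analyticWeight_mul_sq_lconvolution_le {G : Type*} [AddGroup G]
    [MeasurableSpace G] [MeasurableAdd₂ G] [MeasurableNeg G] {μ : Measure G} [SFinite μ]
    [μ.IsAddLeftInvariant] {N : AddGroupSeminorm G} (hN : Measurable N) {s r : ℝ} (hs : 0 ≤ s)
    (hr : 0 ≤ r) {f g : G → ℝ≥0∞} (hf : Measurable f) (hg : Measurable g) :
    ∫⁻ x, analyticWeight s r (N x) * (f ⋆ₗ[μ] g) x ^ 2 ∂μ ≤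
      2 * 4 ^ r * (∫⁻ x, (sobolevWeight r (N x))⁻¹ ∂μ) *
        (∫⁻ x, analyticWeight s r (N x) * f x ^ 2 ∂μ) *
        ∫⁻ x, analyticWeight s r (N x) * g x ^ 2 ∂μ := by
  have h_exp_pos (x : G) : ENNReal.ofReal (Real.exp (2 * s * N x)) ≠ 0 :=
    (ENNReal.ofReal_pos.2 (Real.exp_pos _)).ne'
  refine lintegral_mul_sq_lconvolution_le (by fun_prop) hf hg
    (fun x => mul_ne_zero (h_exp_pos x) (sobolevWeight_ne_zero _ _))
    (fun x => ENNReal.mul_ne_top ENNReal.ofReal_ne_top (sobolevWeight_ne_top _ _)) ?_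
  exact mul_lconvolution_inv_inv_le (by fun_prop) h_exp_pos (fun _ => ENNReal.ofReal_ne_top)
    (fun _ => sobolevWeight_ne_zero _ _) (fun _ => sobolevWeight_ne_top _ _)
    (fun x => by rw [map_neg_eq_map])
    (fun x y => ofReal_exp_le_of_le_add hs (map_add_le_add N x y))
    (fun x y => sobolevWeight_le_of_le_add hr (apply_nonneg N _) (map_add_le_add N x y))

theorem summable_rpow_neg_one_add_int_sq {b : ℝ} (hb : 1 / 2 < b) :
    Summable fun l : ℤ => (1 + (l : ℝ) ^ 2) ^ (-b) := by
  have h_abs : Summable fun l : ℤ => |(l : ℝ)| ^ (-(2 * b)) :=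
    Real.summable_abs_int_rpow (by linarith)
  refine h_abs.of_norm_bounded_eventually ?_
  filter_upwards [(Set.finite_singleton (0 : ℤ)).compl_mem_cofinite] with l hl
  have hl_pos : 0 < |(l : ℝ)| := abs_pos.2 (Int.cast_ne_zero.2 hl)
  calc ‖(1 + (l : ℝ) ^ 2) ^ (-b)‖ = (1 + |(l : ℝ)| ^ 2) ^ (-b) := by
        rw [Real.norm_of_nonneg (by positivity), sq_abs]
    _ ≤ (|(l : ℝ)| ^ 2) ^ (-b) :=
        Real.rpow_le_rpow_of_nonpos (by positivity) (by linarith) (by linarith)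
    _ = |(l : ℝ)| ^ (-(2 * b)) := by
        rw [← Real.rpow_natCast, ← Real.rpow_mul hl_pos.le]
        norm_num

theorem rpow_neg_one_add_add_le {x y a b : ℝ} (hx : 0 ≤ x) (hy : 0 ≤ y) (ha : 0 ≤ a)
    (hb : 0 ≤ b) : (1 + (x + y)) ^ (-(a + b)) ≤ (1 + x) ^ (-a) * (1 + y) ^ (-b) := by
  rw [neg_add, Real.rpow_add (by positivity)]
  gcongr ?_ * ?_
  · exact Real.rpow_le_rpow_of_nonpos (by positivity) (by linarith) (by linarith)
  · exact Real.rpow_le_rpow_of_nonpos (by positivity) (by linarith) (by linarith)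

section FreqModulus

variable {E : Type*} [NormedAddCommGroup E]

/-- The modulus `|(ξ, l)| = √(‖ξ‖² + l²)` of a frequency `(ξ, l) : E × ℤ`, obtained by embedding
`E × ℤ` in the `L²` product of `E` and `ℝ`. -/
def freqModulus (E : Type*) [NormedAddCommGroup E] : AddGroupSeminorm (E × ℤ) :=
  (normAddGroupSeminorm (WithLp 2 (E × ℝ))).comp <|
    (WithLp.addEquiv 2 (E × ℝ)).symm.toAddMonoidHom.comp <|
      (AddMonoidHom.id E).prodMap (Int.castAddHom ℝ)

theorem freqModulus_apply (ξ : E) (l : ℤ) :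
    freqModulus E (ξ, l) = √(‖ξ‖ ^ 2 + (l : ℝ) ^ 2) := by
  simp [freqModulus, WithLp.prod_norm_eq_of_L2]

theorem freqModulus_sq (ξ : E) (l : ℤ) :
    freqModulus E (ξ, l) ^ 2 = ‖ξ‖ ^ 2 + (l : ℝ) ^ 2 := by
  rw [freqModulus_apply, Real.sq_sqrt (by positivity)]

variable [MeasurableSpace E]

theorem measurable_freqModulus [OpensMeasurableSpace E] : Measurable (freqModulus E) := by
  have h_apply : ⇑(freqModulus E) = fun p : E × ℤ => √(‖p.1‖ ^ 2 + (p.2 : ℝ) ^ 2) :=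
    funext fun p => freqModulus_apply p.1 p.2
  rw [h_apply]
  fun_prop

theorem lintegral_inv_sobolevWeight_freqModulus_ne_top [NormedSpace ℝ E] [BorelSpace E]
    [FiniteDimensional ℝ E] (μ : Measure E) [μ.IsAddHaarMeasure] {r : ℝ}
    (hr : Module.finrank ℝ E + 1 < 2 * r) :
    ∫⁻ p, (sobolevWeight r (freqModulus E p))⁻¹ ∂μ.prod .count ≠ ⊤ := by
  obtain ⟨b, hb, hbr⟩ : ∃ b : ℝ, 1 / 2 < b ∧ b < r - Module.finrank ℝ E / 2 :=
    exists_between (by linarith)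
  have hbr_nonneg : 0 ≤ r - b := by
    have : (0 : ℝ) ≤ Module.finrank ℝ E := Nat.cast_nonneg _
    linarith
  have h_left : ∫⁻ ξ : E, ENNReal.ofReal ((1 + ‖ξ‖ ^ 2) ^ (-(r - b))) ∂μ ≠ ⊤ := by
    have h := (integrable_rpow_neg_one_add_norm_sq (μ := μ) (r := 2 * (r - b))
      (by linarith)).lintegral_lt_top.ne
    simpa only [neg_div, mul_div_cancel_left₀ (r - b) two_ne_zero] using h
  have h_right : ∑' l : ℤ, ENNReal.ofReal ((1 + (l : ℝ) ^ 2) ^ (-b)) ≠ ⊤ :=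
    (summable_rpow_neg_one_add_int_sq hb).tsum_ofReal_ne_top
  have h_le (ξ : E) (l : ℤ) : (sobolevWeight r (freqModulus E (ξ, l)))⁻¹ ≤
      ENNReal.ofReal ((1 + ‖ξ‖ ^ 2) ^ (-(r - b))) * ENNReal.ofReal ((1 + (l : ℝ) ^ 2) ^ (-b)) := by
    rw [inv_sobolevWeight, freqModulus_sq, ← ENNReal.ofReal_mul (by positivity)]
    gcongr
    simpa only [sub_add_cancel] using rpow_neg_one_add_add_le (a := r - b) (b := b)
      (sq_nonneg ‖ξ‖) (sq_nonneg (l : ℝ)) hbr_nonneg (by linarith)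
  have h_meas := measurable_freqModulus (E := E)
  rw [lintegral_prod_count μ (by fun_prop)]
  refine ne_top_of_le_ne_top (ENNReal.mul_ne_top h_left h_right) ?_
  rw [← lintegral_mul_const' _ _ h_right]
  refine lintegral_mono fun ξ => ?_
  rw [← ENNReal.tsum_mul_left]
  exact ENNReal.tsum_le_tsum (h_le ξ)

/-- The squared norm of the analytic space with radius `s` and Sobolev order `r`, on the Fourier
side, for data on `E × ℤ` with values in a normed space. It is an iterated integral rather than an
integral over the product, because a convolution of data need not be known to be measurable. -/
def analyticNormSq {A : Type*} [NormedAddCommGroup A] (μ : Measure E) (s r : ℝ) (F : E × ℤ → A) :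
    ℝ≥0∞ :=
  ∫⁻ ξ, ∑' l : ℤ, analyticWeight s r (freqModulus E (ξ, l)) * ‖F (ξ, l)‖ₑ ^ 2 ∂μ

theorem yNormSq_eq_analyticNormSq (d dstar : ℕ) (s : ℝ)
    (F : EuclideanSpace ℝ (Fin (d - 1)) × ℤ → ℂ) :
    YNormSq d dstar s F = analyticNormSq volume s dstar F := by
  refine lintegral_congr fun ξ => tsum_congr fun l => ?_
  rw [analyticWeight, sobolevWeight, freqModulus_sq, freqModulus_apply, ENNReal.rpow_natCast,
    ← ofReal_norm, ← ENNReal.ofReal_pow (by positivity),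
    ← ENNReal.ofReal_pow (by positivity), ← ENNReal.ofReal_mul (by positivity),
    ← ENNReal.ofReal_mul (by positivity), add_assoc]

theorem enorm_integral_tsum_mul_le_lconvolution [BorelSpace E] [SecondCountableTopology E]
    {A : Type*} [NonUnitalNormedRing A] [NormedSpace ℝ A] [MeasurableSpace A]
    [OpensMeasurableSpace A] (μ : Measure E) {F G : E × ℤ → A} (hF : Measurable F)
    (hG : Measurable G) (ξ : E) (l : ℤ) :
    ‖∫ η, ∑' m : ℤ, F (η, m) * G (ξ - η, l - m) ∂μ‖ₑ ≤
      ((‖F ·‖ₑ) ⋆ₗ[μ.prod .count] (‖G ·‖ₑ)) (ξ, l) := by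
  rw [lconvolution_prod_count μ hF.enorm hG.enorm]
  refine (enorm_integral_le_lintegral_enorm _).trans (lintegral_mono fun η => ?_)
  refine enorm_tsum_le_tsum_enorm.trans (ENNReal.tsum_le_tsum fun m => ?_)
  simp only [← ofReal_norm]
  rw [← ENNReal.ofReal_mul (norm_nonneg _)]
  exact ENNReal.ofReal_le_ofReal (norm_mul_le _ _)

theorem analyticNormSq_convolution_le [BorelSpace E] [SecondCountableTopology E] (μ : Measure E)
    [SFinite μ] [μ.IsAddLeftInvariant] {A : Type*} [NonUnitalNormedRing A] [NormedSpace ℝ A]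
    [MeasurableSpace A] [OpensMeasurableSpace A] {s r : ℝ} (hs : 0 ≤ s) (hr : 0 ≤ r)
    {F G : E × ℤ → A} (hF : Measurable F) (hG : Measurable G) :
    analyticNormSq μ s r (fun p => ∫ η, ∑' m : ℤ, F (η, m) * G (p.1 - η, p.2 - m) ∂μ) ≤
      2 * 4 ^ r * (∫⁻ p, (sobolevWeight r (freqModulus E p))⁻¹ ∂μ.prod .count) *
        analyticNormSq μ s r F * analyticNormSq μ s r G := by
  have h_meas := measurable_freqModulus (E := E)
  have h_norm {H : E × ℤ → ℝ≥0∞} (hH : Measurable H) :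
      ∫⁻ ξ, ∑' l : ℤ, analyticWeight s r (freqModulus E (ξ, l)) * H (ξ, l) ^ 2 ∂μ =
        ∫⁻ p, analyticWeight s r (freqModulus E p) * H p ^ 2 ∂μ.prod .count := by
    rw [lintegral_prod_count μ (by fun_prop)]
  calc analyticNormSq μ s r (fun p => ∫ η, ∑' m : ℤ, F (η, m) * G (p.1 - η, p.2 - m) ∂μ)
      ≤ ∫⁻ ξ, ∑' l : ℤ, analyticWeight s r (freqModulus E (ξ, l)) *
          ((‖F ·‖ₑ) ⋆ₗ[μ.prod .count] (‖G ·‖ₑ)) (ξ, l) ^ 2 ∂μ := by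
        refine lintegral_mono fun ξ => ENNReal.tsum_le_tsum fun l => ?_
        gcongr
        exact enorm_integral_tsum_mul_le_lconvolution μ hF hG ξ l
    _ ≤ _ := by
        rw [analyticNormSq, analyticNormSq, h_norm (measurable_lconvolution _ hF.enorm hG.enorm),
          h_norm hF.enorm, h_norm hG.enorm]
        exact lintegral_analyticWeight_mul_sq_lconvolution_le h_meas hs hr hF.enorm hG.enorm

theorem stmt5_general [NormedSpace ℝ E] [BorelSpace E] [FiniteDimensional ℝ E] (μ : Measure E)
    [μ.IsAddHaarMeasure] {A : Type*} [NonUnitalNormedRing A] [NormedSpace ℝ A]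
    [CompleteSpace A] [MeasurableSpace A] [OpensMeasurableSpace A] {r : ℝ}
    (hr : Module.finrank ℝ E + 1 < 2 * r) :
    ∃ C > (0 : ℝ), ∀ s ≥ (0 : ℝ), ∀ F G : E × ℤ → A, Measurable F → Measurable G →
      analyticNormSq μ s r (fun p => ∫ η, ∑' m : ℤ, F (η, m) * G (p.1 - η, p.2 - m) ∂μ) ≤
        ENNReal.ofReal (C ^ 2) * analyticNormSq μ s r F * analyticNormSq μ s r G := by
  have hr₀ : 0 ≤ r := by
    have : (0 : ℝ) ≤ Module.finrank ℝ E := Nat.cast_nonneg _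
    linarith
  have hK : 2 * 4 ^ r * ∫⁻ p, (sobolevWeight r (freqModulus E p))⁻¹ ∂μ.prod .count ≠ ⊤ :=
    ENNReal.mul_ne_top
      (ENNReal.mul_ne_top (by norm_num) (ENNReal.rpow_ne_top_of_nonneg hr₀ (by norm_num)))
      (lintegral_inv_sobolevWeight_freqModulus_ne_top μ hr)
  obtain ⟨C, hC, hKC⟩ := exists_pos_le_ofReal_sq hK
  refine ⟨C, hC, fun s hs F G hF hG => ?_⟩
  exact (analyticNormSq_convolution_le μ hs hr₀ hF hG).trans (by gcongr)

end FreqModulus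

/-- **Lemma 3.4** (Fourier side): the analytic space `Y_s` is a Banach algebra up to a
constant: the convolution of two Fourier data satisfies `‖F ⋆ G‖_s ≤ C ‖F‖_s ‖G‖_s`,
stated here with squared norms. -/
theorem stmt5 (d dstar : ℕ) (hd : 2 ≤ d) (hdstar : d < 2 * dstar) :
    ∃ C > 0, ∀ s ∈ Set.Icc (0 : ℝ) 1,
      ∀ F G : EuclideanSpace ℝ (Fin (d - 1)) × ℤ → ℂ,
        Measurable F → Measurable G →
        YNormSq d dstar s F ≠ ⊤ → YNormSq d dstar s G ≠ ⊤ →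
        YNormSq d dstar s (fun p => ∫ η, ∑' μ : ℤ, F (η, μ) * G (p.1 - η, p.2 - μ))
          ≤ ENNReal.ofReal (C ^ 2) * YNormSq d dstar s F * YNormSq d dstar s G := by
  have hfinrank : Module.finrank ℝ (EuclideanSpace ℝ (Fin (d - 1))) + 1 < 2 * (dstar : ℝ) := by
    rw [finrank_euclideanSpace_fin]
    norm_cast
    omega
  obtain ⟨C, hC, h⟩ := stmt5_general (A := ℂ) volume hfinrank
  refine ⟨C, hC, fun s hs F G hF hG _ _ => ?_⟩
  simpa only [yNormSq_eq_analyticNormSq] using h s hs.1 F G hF hG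

end
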